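/- Let f : ℝ → ℝ be operator monotone on [0,∞) with f(x) > 0 for x > 0, and let A, B be complex matrices with m·I ≤ A ≤ M·I and m·I ≤ B ≤ M·I for some scalars 0 < m < M. Then f(A) ♯ f(B) ≤ ((M+m)/(2√(Mm)))·f(A ♯ B). -/

import Mathlib

open Matrix ComplexOrder

/-- Loewner order: `A ≤ B` iff `B - A` is positive semidefinite. -/
def LoewnerLE {n : Type} [Fintype n] (A B : Matrix n n ℂ) : Prop := (B - A).PosSemidef

/-- The positive square root of a (Hermitian) matrix, via the continuous functional calculus. -/
noncomputable def msqrt {n : Type} [Fintype n] [DecidableEq n] (A : Matrix n n ℂ) :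
    Matrix n n ℂ := cfc Real.sqrt A

/-- The arithmetic mean `A ∇ B = (A + B)/2`. -/
noncomputable def amean {n : Type} [Fintype n] [DecidableEq n] (A B : Matrix n n ℂ) :
    Matrix n n ℂ := (2 : ℝ)⁻¹ • (A + B)

/-- The harmonic mean `A ! B = ((A⁻¹ + B⁻¹)/2)⁻¹`. -/
noncomputable def hmean {n : Type} [Fintype n] [DecidableEq n] (A B : Matrix n n ℂ) :
    Matrix n n ℂ := ((2 : ℝ)⁻¹ • (A⁻¹ + B⁻¹))⁻¹

/-- The geometric mean `A ♯ B = A^(1/2) (A^(-1/2) B A^(-1/2))^(1/2) A^(1/2)`. -/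
noncomputable def gmean {n : Type} [Fintype n] [DecidableEq n] (A B : Matrix n n ℂ) :
    Matrix n n ℂ := msqrt A * msqrt ((msqrt A)⁻¹ * B * (msqrt A)⁻¹) * msqrt A

/-- `f : ℝ → ℝ` is operator monotone on `[0,∞)`: it is continuous and nonnegative on `[0,∞)`
and monotone on positive-semidefinite complex matrices of every finite size, with `f` applied
via the continuous functional calculus. -/
def OpMonotone (f : ℝ → ℝ) : Prop :=
  ContinuousOn f (Set.Ici 0) ∧ (∀ x : ℝ, 0 ≤ x → 0 ≤ f x) ∧
    ∀ (k : Type) [Fintype k] [DecidableEq k] (X Y : Matrix k k ℂ),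
      X.PosSemidef → LoewnerLE X Y → LoewnerLE (cfc f X) (cfc f Y)

/-- `g : ℝ → ℝ` is operator monotone decreasing on `(0,∞)`: it is continuous and nonnegative on
`(0,∞)` and antitone on positive-definite complex matrices of every finite size, with `g` applied
via the continuous functional calculus. -/
def OpAntitone (g : ℝ → ℝ) : Prop :=
  ContinuousOn g (Set.Ioi 0) ∧ (∀ x : ℝ, 0 < x → 0 ≤ g x) ∧
    ∀ (k : Type) [Fintype k] [DecidableEq k] (X Y : Matrix k k ℂ),
      X.PosDef → Y.PosDef → LoewnerLE X Y → LoewnerLE (cfc g Y) (cfc g X)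

open scoped MatrixOrder

noncomputable def bdiag (n : Type) [Fintype n] [DecidableEq n] :
    (Matrix n n ℂ × Matrix n n ℂ) →ₐ[ℝ] Matrix (n ⊕ n) (n ⊕ n) ℂ where
  toFun p := fromBlocks p.1 0 0 p.2
  map_one' := by simp
  map_mul' p q := by simp [fromBlocks_multiply]
  map_zero' := by simp
  map_add' p q := by simp [fromBlocks_add]
  commutes' r := by
    simp [Algebra.algebraMap_eq_smul_one, ← fromBlocks_one, fromBlocks_smul]

lemma contSpec {n : Type} [Fintype n] [DecidableEq n] (f : ℝ → ℝ) (A : Matrix n n ℂ) : ContinuousOn f (spectrum ℝ A) :=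
  (Matrix.finite_real_spectrum).continuousOn f

lemma exists_poly (f : ℝ → ℝ) (s : Set ℝ) (hs : s.Finite) :
    ∃ p : Polynomial ℝ, ∀ x ∈ s, f x = p.eval x := by
  classical
  refine ⟨Lagrange.interpolate hs.toFinset id f, fun x hx => ?_⟩
  have := Lagrange.eval_interpolate_at_node (s := hs.toFinset) (v := id) f
    (Function.injective_id.injOn) (i := x) (by simpa using hx)
  simpa using this.symm

lemma cfc_eq_aeval {n : Type} [Fintype n] [DecidableEq n] (f : ℝ → ℝ) (A : Matrix n n ℂ) (hA : A.IsHermitian) (p : Polynomial ℝ)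
    (h : ∀ x ∈ spectrum ℝ A, f x = p.eval x) : cfc f A = Polynomial.aeval A p := by
  rw [cfc_congr (g := p.eval) h]
  exact cfc_polynomial p A hA

lemma cfc_bdiag {n : Type} [Fintype n] [DecidableEq n] (f : ℝ → ℝ) (A B : Matrix n n ℂ) (hA : A.IsHermitian) (hB : B.IsHermitian) :
    cfc f (fromBlocks A 0 0 B) = fromBlocks (cfc f A) 0 0 (cfc f B) := by
  obtain ⟨p, hp⟩ := exists_poly f (spectrum ℝ A ∪ spectrum ℝ B ∪ spectrum ℝ (fromBlocks A 0 0 B))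
    ((Matrix.finite_real_spectrum.union Matrix.finite_real_spectrum).union
      Matrix.finite_real_spectrum)
  rw [cfc_eq_aeval f A hA p (fun x hx => hp x (by simp [hx])),
    cfc_eq_aeval f B hB p (fun x hx => hp x (by simp [hx])),
    cfc_eq_aeval f _ (hA.fromBlocks (by simp) hB) p (fun x hx => hp x (by simp [hx]))]
  have h1 := Polynomial.aeval_algHom_apply (bdiag n) (A, B) p
  have h2 := Polynomial.aeval_algHom_apply (AlgHom.fst ℝ (Matrix n n ℂ) (Matrix n n ℂ)) (A, B) p
  have h3 := Polynomial.aeval_algHom_apply (AlgHom.snd ℝ (Matrix n n ℂ) (Matrix n n ℂ)) (A, B) p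
  simp only [AlgHom.fst_apply, AlgHom.snd_apply] at h2 h3
  rw [h2, h3]
  exact h1

lemma cfc_conj {n : Type} [Fintype n] [DecidableEq n] (f : ℝ → ℝ) (A U : Matrix n n ℂ) (hA : A.IsHermitian) (hU : U ∈ unitary (Matrix n n ℂ)) :
    cfc f (U * A * Uᴴ) = U * cfc f A * Uᴴ := by
  have := StarAlgHomClass.map_cfc (S := ℝ) (Unitary.conjStarAlgAut ℝ _ (⟨U, hU⟩ : unitary (Matrix n n ℂ))) f A
    (contSpec _ _) ?_ hA ?_
  · exact this.symm
  · change Continuous (fun X => U * X * Uᴴ)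
    fun_prop
  · exact IsSelfAdjoint.map hA _

lemma schur {n : Type} [Fintype n] [DecidableEq n] (D R : Matrix n n ℂ) (hD : D.IsHermitian) (ε : ℝ) (hε : 0 < ε)
    (h : (R - ε⁻¹ • (D * D)).PosSemidef) : (fromBlocks (ε • 1) D D R).PosSemidef := by
  have e1 : fromBlocks (ε • 1) D D R = ε⁻¹ • ((fromBlocks (ε • 1) D 0 0)ᴴ * (fromBlocks (ε • 1) D 0 0))
     + fromBlocks 0 0 0 (R - ε⁻¹ • (D * D)) := by
    simp [fromBlocks_conjTranspose, fromBlocks_multiply, fromBlocks_smul, fromBlocks_add, hD.eq, smul_smul, hε.ne']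
  rw [e1]
  refine PosSemidef.add ((posSemidef_conjTranspose_mul_self _).smul (by positivity)) ?_
  obtain ⟨C, hC⟩ := CStarAlgebra.nonneg_iff_eq_star_mul_self.mp h.nonneg
  have : fromBlocks 0 0 0 (R - ε⁻¹ • (D * D)) = (fromBlocks 0 0 0 C)ᴴ * (fromBlocks (0 : Matrix n n ℂ) 0 0 C) := by
    simp [fromBlocks_conjTranspose, fromBlocks_multiply, hC, star_eq_conjTranspose]
  rw [this]
  exact posSemidef_conjTranspose_mul_self _

lemma exists_ub {n : Type} [Fintype n] [DecidableEq n] (E : Matrix n n ℂ) (hE : E.IsHermitian) :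
    ∃ l : ℝ, 0 ≤ l ∧ E ≤ l • 1 := by
  obtain ⟨l, hl⟩ := (Matrix.finite_real_spectrum (A := E)).bddAbove
  refine ⟨max l 0, le_max_right _ _, ?_⟩
  rw [← Algebra.algebraMap_eq_smul_one]
  exact le_algebraMap_of_spectrum_le (fun x hx => (hl hx).trans (le_max_left _ _)) hE

lemma corner {n : Type} [Fintype n] [DecidableEq n] (A B C D : Matrix n n ℂ) 
    (h : (fromBlocks A B C D).PosSemidef) : A.PosSemidef :=
  h.submatrix Sum.inl

lemma jensen_eps {n : Type} [Fintype n] [DecidableEq n] (f : ℝ → ℝ) (hf : OpMonotone f) (A B : Matrix n n ℂ) (hA : A.PosSemidef)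
    (hB : B.PosSemidef) (c s : ℝ) (hcs : c ^ 2 + s ^ 2 = 1) (ε : ℝ) (hε : 0 < ε) :
    c ^ 2 • cfc f A + s ^ 2 • cfc f B ≤ cfc f (c ^ 2 • A + s ^ 2 • B + ε • 1) := by
  set U : Matrix (n ⊕ n) (n ⊕ n) ℂ := fromBlocks (c • 1) (s • 1) (-s • 1) (c • 1) with hUdef
  have hU : U ∈ unitary (Matrix (n ⊕ n) (n ⊕ n) ℂ) := by
    rw [Unitary.mem_iff]
    constructor <;>
    · simp only [hUdef, star_eq_conjTranspose, fromBlocks_conjTranspose, fromBlocks_multiply, conjTranspose_smul, conjTranspose_one, star_trivial, smul_mul_assoc, mul_smul_comm, one_mul, smul_smul, ← add_smul, ← fromBlocks_one]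
      congr 1 <;> first | (rw [show (1 : Matrix n n ℂ) = (1:ℝ) • 1 by simp]; simp only [smul_smul, ← add_smul]; congr 1; linarith) | (ring_nf; simp)
  set E := s ^ 2 • A + c ^ 2 • B
  set D := (c * s) • (B - A)
  have conjF : ∀ X Y : Matrix n n ℂ, U * fromBlocks X 0 0 Y * Uᴴ = fromBlocks (c ^ 2 • X + s ^ 2 • Y) 
     ((c * s) • (Y - X)) ((c * s) • (Y - X)) (s ^ 2 • X + c ^ 2 • Y) := by
    intro X Y
    simp only [hUdef, fromBlocks_conjTranspose, fromBlocks_multiply, conjTranspose_smul, conjTranspose_one, star_trivial, smul_mul_assoc, mul_smul_comm, one_mul, mul_one, smul_smul, mul_zero, zero_add, add_zero, smul_zero]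
    congr 1 <;> module
  have hAh := hA.isHermitian
  have hBh := hB.isHermitian
  have hD : D.IsHermitian := by
    simp [D, IsHermitian, hAh.eq, hBh.eq]
  have hE : E.IsHermitian := by
    simp [E, IsHermitian, hAh.eq, hBh.eq]
  obtain ⟨l, hl0, hl⟩ := exists_ub (E + ε⁻¹ • (D * D)) (by simp [IsHermitian, hD.eq, hE.eq])
  have hdiag : (fromBlocks A 0 0 B).PosSemidef := by
    obtain ⟨P, hP⟩ := CStarAlgebra.nonneg_iff_eq_star_mul_self.mp hA.nonneg
    obtain ⟨Q, hQ⟩ := CStarAlgebra.nonneg_iff_eq_star_mul_self.mp hB.nonneg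
    have : fromBlocks A 0 0 B = (fromBlocks P 0 0 Q)ᴴ * (fromBlocks P 0 0 Q) := by
      simp [fromBlocks_conjTranspose, fromBlocks_multiply, hP, hQ, star_eq_conjTranspose]
    rw [this]
    exact posSemidef_conjTranspose_mul_self _
  have key := hf.2.2 (n ⊕ n) (U * fromBlocks A 0 0 B * Uᴴ)
    (fromBlocks (c ^ 2 • A + s ^ 2 • B + ε • 1) 0 0 (l • 1)) (hdiag.mul_mul_conjTranspose_same U) ?_
  · rw [cfc_conj f _ U hdiag.isHermitian hU, cfc_bdiag f _ _ hAh hBh, conjF,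
      cfc_bdiag f _ _ (by simp [IsHermitian, hAh.eq, hBh.eq]) (by simp [IsHermitian])] at key
    unfold LoewnerLE at key
    rw [sub_eq_add_neg, fromBlocks_neg, fromBlocks_add] at key
    rw [Matrix.le_iff, sub_eq_add_neg]
    exact corner _ _ _ _ key
  · unfold LoewnerLE
    rw [conjF, sub_eq_add_neg, fromBlocks_neg, fromBlocks_add]
    have := schur (-D) (l • 1 - E) hD.neg ε hε (by
      rw [Matrix.le_iff] at hl
      have e : l • 1 - E - ε⁻¹ • (-D * -D) = l • 1 - (E + ε⁻¹ • (D * D)) := by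
        rw [neg_mul_neg]; abel
      rw [e]; exact hl)
    convert this using 2
    · abel
    · simp [D]
    · simp [D]
    · rw [sub_eq_add_neg]

lemma scalar_le (f : ℝ → ℝ) (hf : OpMonotone f) (K x : ℝ) (hK : 1 ≤ K) (hx : 0 ≤ x) :
    f (K * x) ≤ K * f x := by
  have hK0 : 0 < K := by linarith
  have hK1 : K⁻¹ ≤ 1 := inv_le_one_of_one_le₀ hK
  have h1 : ∀ ε : ℝ, 0 < ε → K⁻¹ * f (K * x) ≤ f (x + ε) := by
    intro ε hε
    have := jensen_eps (n := Unit) f hf (algebraMap ℝ _ 0) (algebraMap ℝ _ (K * x))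
      (by rw [map_zero]; exact PosSemidef.zero)
      (by rw [Algebra.algebraMap_eq_smul_one]; exact PosSemidef.one.smul (by positivity))
      (√(1 - K⁻¹)) (√(K⁻¹)) (by
        rw [Real.sq_sqrt (by linarith), Real.sq_sqrt (by positivity)]; ring) ε hε
    rw [Real.sq_sqrt (by linarith), Real.sq_sqrt (by positivity)] at this
    have e : (1 - K⁻¹) • (algebraMap ℝ (Matrix Unit Unit ℂ) 0) +
        K⁻¹ • algebraMap ℝ (Matrix Unit Unit ℂ) (K * x) + ε • 1 = algebraMap ℝ _ (x + ε) := by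
      simp only [Algebra.algebraMap_eq_smul_one, smul_smul, ← add_smul]
      congr 1; field_simp; ring
    rw [e, cfc_algebraMap, cfc_algebraMap, cfc_algebraMap] at this
    simp only [Algebra.algebraMap_eq_smul_one, smul_smul, ← add_smul] at this
    rw [Matrix.le_iff, ← sub_smul] at this
    have := this.diag_nonneg (i := ())
    simp only [Matrix.smul_apply, one_apply_eq, Complex.real_smul, mul_one] at this
    have := Complex.zero_le_real.mp this
    have h0 : 0 ≤ (1 - K⁻¹) * f 0 := mul_nonneg (by linarith) (hf.2.1 0 le_rfl)
    linarith
  have h2 : K⁻¹ * f (K * x) ≤ f x := by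
    have hc : Filter.Tendsto (fun ε : ℝ => f (x + ε)) (nhdsWithin 0 (Set.Ioi 0)) (nhds (f x)) := by
      have := (hf.1 x hx).tendsto
      refine this.comp (tendsto_nhdsWithin_iff.mpr ⟨?_, ?_⟩)
      · have : Filter.Tendsto (fun ε : ℝ => x + ε) (nhds 0) (nhds (x + 0)) :=
          (continuous_const.add continuous_id).tendsto 0
        rw [add_zero] at this
        exact this.mono_left nhdsWithin_le_nhds
      · filter_upwards [self_mem_nhdsWithin] with ε hε
        have : 0 < ε := hε
        simp only [Set.mem_Ici]; linarith
    refine ge_of_tendsto hc ?_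
    filter_upwards [self_mem_nhdsWithin] with ε hε using h1 ε hε
  rw [inv_mul_le_iff₀ hK0] at h2
  exact h2

lemma spec_nonneg {n : Type} [Fintype n] [DecidableEq n] {X : Matrix n n ℂ} (hX : X.PosSemidef) :
    ∀ x ∈ spectrum ℝ X, 0 ≤ x := by
  intro x hx
  exact spectrum_nonneg_of_nonneg hX.nonneg hx

lemma cfc_scale {n : Type} [Fintype n] [DecidableEq n] (f : ℝ → ℝ) (hf : OpMonotone f)
    (X : Matrix n n ℂ) (hX : X.PosSemidef) (K : ℝ) (hK : 1 ≤ K) :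
    cfc f (K • X) ≤ K • cfc f X := by
  have hXs : IsSelfAdjoint X := hX.isHermitian
  have e1 : K • X = cfc (fun x => K * x) X := by
    rw [cfc_const_mul_id K X hXs]
  rw [e1, ← cfc_comp f (fun x => K * x) X hXs
    ((Set.Finite.image _ Matrix.finite_real_spectrum).continuousOn f) (contSpec _ _),
    ← cfc_const_mul K f X (contSpec _ _)]
  exact cfc_mono (fun x hx => scalar_le f hf K x hK (spec_nonneg hX x hx)) (contSpec _ _)
    (contSpec _ _)

lemma msqrt_facts {n : Type} [Fintype n] [DecidableEq n] (P : Matrix n n ℂ) (hP : P.PosDef) :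
    (msqrt P).IsHermitian ∧ msqrt P * msqrt P = P ∧ IsUnit (msqrt P).det := by
  have h2 : msqrt P * msqrt P = P := by
    have hPs : IsSelfAdjoint P := hP.isHermitian
    unfold msqrt
    rw [← cfc_mul _ _ P (contSpec _ _) (contSpec _ _)]
    conv_rhs => rw [← cfc_id ℝ P hPs]
    refine cfc_congr fun x hx => ?_
    exact Real.mul_self_sqrt (spec_nonneg hP.posSemidef x hx)
  refine ⟨?_, h2, ?_⟩
  · exact cfc_predicate Real.sqrt P
  · have : IsUnit (msqrt P * msqrt P).det := by
      rw [h2]; exact (Matrix.isUnit_iff_isUnit_det _).mp hP.isUnit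
    rw [det_mul] at this
    exact isUnit_of_mul_isUnit_left this

lemma gm_key {n : Type} [Fintype n] [DecidableEq n] (P Q : Matrix n n ℂ) (hP : P.PosDef)
    (hQ : Q.PosSemidef) (u v : ℝ) (huv : u • P ≤ Q ∧ Q ≤ v • P) (a b k : ℝ)
    (h : ∀ x : ℝ, 0 ≤ x → u ≤ x → x ≤ v → 0 ≤ a + b * x + k * √x) :
    0 ≤ a • P + b • Q + k • gmean P Q := by
  obtain ⟨hS, hSS, hSu⟩ := msqrt_facts P hP
  unfold gmean
  set S := msqrt P
  set T := S⁻¹ * Q * S⁻¹ with hT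
  have hSi : (S⁻¹).IsHermitian := hS.inv
  have i1 : S * S⁻¹ = 1 := Matrix.mul_nonsing_inv S hSu
  have i2 : S⁻¹ * S = 1 := Matrix.nonsing_inv_mul S hSu
  have conj : ∀ X Y : Matrix n n ℂ, X ≤ Y → S⁻¹ * X * S⁻¹ ≤ S⁻¹ * Y * S⁻¹ := fun X Y hXY => by
    have := star_left_conjugate_le_conjugate hXY S⁻¹
    rwa [star_eq_conjTranspose, hSi.eq] at this
  have hTpsd : T.PosSemidef := by
    have := hQ.conjTranspose_mul_mul_same S⁻¹
    rwa [hSi.eq] at this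
  have hTs : IsSelfAdjoint T := hTpsd.isHermitian
  have ePi : S⁻¹ * P * S⁻¹ = 1 := by
    rw [← hSS, ← mul_assoc, i2, one_mul, i1]
  have eQ : S * T * S = Q := by
    rw [hT]
    calc S * (S⁻¹ * Q * S⁻¹) * S = (S * S⁻¹) * Q * (S⁻¹ * S) := by simp only [mul_assoc]
      _ = Q := by rw [i1, i2, one_mul, mul_one]
  have hu : ∀ x ∈ spectrum ℝ T, u ≤ x := by
    rw [← algebraMap_le_iff_le_spectrum hTs]
    have := conj _ _ huv.1
    rwa [mul_smul_comm, smul_mul_assoc, ePi, ← Algebra.algebraMap_eq_smul_one] at this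
  have hv : ∀ x ∈ spectrum ℝ T, x ≤ v := by
    rw [← le_algebraMap_iff_spectrum_le hTs]
    have := conj _ _ huv.2
    rwa [mul_smul_comm, smul_mul_assoc, ePi, ← Algebra.algebraMap_eq_smul_one] at this
  have hpos : 0 ≤ cfc (fun x => a + b * x + k * √x) T :=
    cfc_nonneg fun x hx => h x (spec_nonneg hTpsd x hx) (hu x hx) (hv x hx)
  have e : cfc (fun x => a + b * x + k * √x) T = a • 1 + b • T + k • msqrt T := by
    rw [cfc_add T _ _ (contSpec _ _) (contSpec _ _), cfc_add T _ _ (contSpec _ _) (contSpec _ _),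
      cfc_const_mul k _ T (contSpec _ _), cfc_const_mul_id b T hTs, cfc_const a T hTs,
      Algebra.algebraMap_eq_smul_one]
    rfl
  have := star_left_conjugate_nonneg hpos S
  rw [e, star_eq_conjTranspose, hS.eq] at this
  convert this using 1
  rw [mul_add, mul_add, add_mul, add_mul]
  simp only [mul_smul_comm, smul_mul_assoc, mul_one]
  rw [hSS, eQ]

lemma posDef_of_ge {n : Type} [Fintype n] [DecidableEq n] {A : Matrix n n ℂ} {m : ℝ} (hm : 0 < m)
    (h : m • 1 ≤ A) : A.PosDef := by
  have h1 : (m • (1 : Matrix n n ℂ)).PosDef := PosDef.one.smul hm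
  have := h1.add_posSemidef (Matrix.le_iff.mp h)
  simpa using this

lemma exists_lb {n : Type} [Fintype n] [DecidableEq n] (E : Matrix n n ℂ) (hE : E.IsHermitian)
    (h : ∀ x ∈ spectrum ℝ E, 0 < x) :
    ∃ l : ℝ, 0 < l ∧ l • 1 ≤ E := by
  have hfin := Matrix.finite_real_spectrum (A := E)
  rcases (spectrum ℝ E).eq_empty_or_nonempty with he | hne
  · refine ⟨1, one_pos, ?_⟩
    rw [← Algebra.algebraMap_eq_smul_one]
    exact algebraMap_le_of_le_spectrum (fun x hx => by simp [he] at hx) hE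
  · obtain ⟨l, hl, hl'⟩ := hfin.exists_minimal hne
    refine ⟨l, h l hl, ?_⟩
    rw [← Algebra.algebraMap_eq_smul_one]
    exact algebraMap_le_of_le_spectrum (fun x hx => by
      rcases le_total l x with h1 | h1
      · exact h1
      · exact hl' hx h1) hE

lemma scal_ineq (m M x : ℝ) (hm : 0 < m) (hmM : m < M) (h0 : 0 ≤ x) (h1 : m / M ≤ x)
    (h2 : x ≤ M / m) : 0 ≤ -(1 / 2) + -(1 / 2) * x + (M + m) / (2 * √(M * m)) * √x := by
  have hM : 0 < M := hm.trans hmM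
  have hq : 0 < √(M * m) := Real.sqrt_pos.mpr (by positivity)
  have hkey : (1 + x) * √(M * m) ≤ (M + m) * √x := by
    rw [div_le_iff₀ hM] at h1
    rw [le_div_iff₀ hm] at h2
    refine le_of_sq_le_sq ?_ (by positivity)
    rw [mul_pow, mul_pow, Real.sq_sqrt (by positivity), Real.sq_sqrt h0]
    nlinarith [mul_nonneg (sub_nonneg.mpr h1) (sub_nonneg.mpr h2)]
  have : (1 + x) / 2 ≤ (M + m) / (2 * √(M * m)) * √x := by
    rw [div_mul_eq_mul_div, div_le_div_iff₀ (by norm_num) (by positivity)]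
    nlinarith
  linarith

theorem geom_mean_monotone_reverse {ι : Type} [Fintype ι] [DecidableEq ι]
    (f : ℝ → ℝ) (hf : OpMonotone f) (hf' : ∀ x : ℝ, 0 < x → 0 < f x)
    (A B : Matrix ι ι ℂ) (m M : ℝ) (hm : 0 < m) (hmM : m < M)
    (hA1 : LoewnerLE (m • (1 : Matrix ι ι ℂ)) A) (hA2 : LoewnerLE A (M • (1 : Matrix ι ι ℂ)))
    (hB1 : LoewnerLE (m • (1 : Matrix ι ι ℂ)) B) (hB2 : LoewnerLE B (M • (1 : Matrix ι ι ℂ))) :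
    LoewnerLE (gmean (cfc f A) (cfc f B))
      (((M + m) / (2 * Real.sqrt (M * m))) • cfc f (gmean A B)) := by
  have hM : 0 < M := hm.trans hmM
  change m • 1 ≤ A at hA1
  change A ≤ M • 1 at hA2
  change m • 1 ≤ B at hB1
  change B ≤ M • 1 at hB2
  change gmean (cfc f A) (cfc f B) ≤ ((M + m) / (2 * Real.sqrt (M * m))) • cfc f (gmean A B)
  have hsm : ∀ (c : ℝ) (X Y : Matrix ι ι ℂ), 0 ≤ c → X ≤ Y → c • X ≤ c • Y := by
    intro c X Y hc h
    rw [Matrix.le_iff, ← smul_sub]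
    exact (Matrix.le_iff.mp h).smul hc
  have hA := posDef_of_ge hm hA1
  have hB := posDef_of_ge hm hB1
  set K := (M + m) / (2 * Real.sqrt (M * m)) with hK
  have hK1 : 1 ≤ K := by
    have := scal_ineq m M 1 hm hmM (by norm_num) (by rw [div_le_one hM]; exact hmM.le)
      (by rw [one_le_div hm]; exact hmM.le)
    rw [Real.sqrt_one] at this
    linarith
  have hAB1 : (m / M) • A ≤ B := by
    refine le_trans ?_ hB1
    have := hsm (m / M) _ _ (by positivity) hA2
    rwa [smul_smul, div_mul_cancel₀ _ hM.ne'] at this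
  have hAB2 : B ≤ (M / m) • A := by
    refine hB2.trans ?_
    have := hsm (M / m) _ _ (by positivity) hA1
    rwa [smul_smul, div_mul_cancel₀ _ hm.ne'] at this
  have hG0 : (gmean A B).PosSemidef := by
    have := gm_key A B hA hB.posSemidef _ _ ⟨hAB1, hAB2⟩ 0 0 1 (fun x _ _ _ => by
      simp)
    simpa using this.posSemidef
  set C : Matrix ι ι ℂ := (1 / 2 : ℝ) • A + (1 / 2 : ℝ) • B with hC
  have hCm : m • 1 ≤ C := by
    have := add_le_add (hsm (1 / 2) _ _ (by norm_num) hA1) (hsm (1 / 2) _ _ (by norm_num) hB1)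
    refine le_trans (le_of_eq ?_) this
    module
  have hCp := posDef_of_ge hm hCm
  have hCG : C ≤ K • gmean A B := by
    have := gm_key A B hA hB.posSemidef _ _ ⟨hAB1, hAB2⟩ (-(1 / 2)) (-(1 / 2)) K
      (fun x h0 h1 h2 => scal_ineq m M x hm hmM h0 h1 h2)
    rw [← sub_nonneg]
    convert this using 1
    rw [hC]; module
  have h3 : cfc f C ≤ K • cfc f (gmean A B) :=
    le_trans (hf.2.2 ι _ _ hCp.posSemidef hCG) (cfc_scale f hf _ hG0 K hK1)
  have hspec : ∀ X : Matrix ι ι ℂ, X.PosDef → (cfc f X).PosDef := by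
    intro X hX
    have hXs : IsSelfAdjoint X := hX.isHermitian
    obtain ⟨l, hl, hl'⟩ := exists_lb (cfc f X) (cfc_predicate f X) (by
      rw [cfc_map_spectrum f X hXs (contSpec _ _)]
      rintro _ ⟨x, hx, rfl⟩
      apply hf'
      rw [hX.isHermitian.spectrum_real_eq_range_eigenvalues] at hx
      obtain ⟨i, rfl⟩ := hx
      exact hX.eigenvalues_pos i)
    exact posDef_of_ge hl hl'
  have hfA := hspec A hA
  have hfB := hspec B hB
  -- comparison constants for f(A), f(B)
  obtain ⟨l, hl, hl'⟩ : ∃ l : ℝ, 0 < l ∧ l • 1 ≤ cfc f A := by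
    refine exists_lb _ hfA.isHermitian ?_
    intro x hx
    rw [hfA.isHermitian.spectrum_real_eq_range_eigenvalues] at hx
    obtain ⟨i, rfl⟩ := hx
    exact hfA.eigenvalues_pos i
  obtain ⟨w, hw, hw'⟩ := exists_ub (cfc f B) hfB.isHermitian
  have h1 : gmean (cfc f A) (cfc f B) ≤ (1 / 2 : ℝ) • cfc f A + (1 / 2 : ℝ) • cfc f B := by
    have := gm_key (cfc f A) (cfc f B) hfA hfB.posSemidef 0 (w / l)
      ⟨by rw [zero_smul]; exact hfB.posSemidef.nonneg, by
        refine hw'.trans ?_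
        have := hsm (w / l) _ _ (by positivity) hl'
        rwa [smul_smul, div_mul_cancel₀ _ hl.ne'] at this⟩ (1 / 2) (1 / 2) (-1)
      (fun x h0 _ _ => by nlinarith [Real.sq_sqrt h0, sq_nonneg (√x - 1)])
    rw [← sub_nonneg]
    convert this using 1
    module
  have h2 : ∀ ε : ℝ, 0 < ε → (1 / 2 : ℝ) • cfc f A + (1 / 2 : ℝ) • cfc f B
      ≤ (1 + ε) • cfc f C := by
    intro ε hε
    have j := jensen_eps f hf A B hA.posSemidef hB.posSemidef (√(1 / 2)) (√(1 / 2))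
      (by rw [Real.sq_sqrt (by norm_num)]; norm_num) (ε * m) (by positivity)
    rw [Real.sq_sqrt (by norm_num)] at j
    refine j.trans (le_trans (hf.2.2 ι _ ((1 + ε) • C) ?_ ?_)
      (cfc_scale f hf C hCp.posSemidef (1 + ε) (by linarith)))
    · exact hCp.posSemidef.add (PosSemidef.one.smul (by positivity))
    · change C + (ε * m) • 1 ≤ (1 + ε) • C
      rw [add_smul, one_smul, mul_smul]
      exact add_le_add le_rfl (hsm _ _ _ hε.le hCm)
  have h2' : (1 / 2 : ℝ) • cfc f A + (1 / 2 : ℝ) • cfc f B ≤ cfc f C := by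
    have hfC := hspec C hCp
    rw [Matrix.le_iff, posSemidef_iff_dotProduct_mulVec]
    refine ⟨hfC.isHermitian.sub (hfA.posSemidef.smul (by norm_num) |>.add
      (hfB.posSemidef.smul (by norm_num))).isHermitian, fun x => ?_⟩
    have hc : Continuous (fun ε : ℝ => star x ⬝ᵥ (((1 + ε) • cfc f C -
        ((1 / 2 : ℝ) • cfc f A + (1 / 2 : ℝ) • cfc f B)) *ᵥ x)) := by
      fun_prop
    have ht := (hc.tendsto 0).mono_left (nhdsWithin_le_nhds (s := Set.Ioi 0))
    rw [add_zero, one_smul] at ht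
    refine ge_of_tendsto ht ?_
    filter_upwards [self_mem_nhdsWithin] with ε hε
    exact (posSemidef_iff_dotProduct_mulVec.mp (Matrix.le_iff.mp (h2 ε hε))).2 x
  exact h1.trans (h2'.trans h3)
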